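/- arXiv:1503.08845 — 2 statements merged into one kernel-verified Lean document; each statement's English description precedes it below -/
import Mathlib

section
/- There exist constants C > 0 and h0 ∈ (0,1] such that for every h ∈ (0, h0], the smooth deformation u^h(x', x3) = y0(x') + x3 b0(x') + (x3²/2) d0(x'), restricted to Ω^h = Ω × (−h/2, h/2), satisfies E^h(u^h) ≤ C h⁴; in particular the infimum of E^h over all deformations u ∈ W^{1,2}(Ω^h, ℝ³) is at most C h⁴. -/
noncomputable section

open scoped Topology ENNReal
open Filter MeasureTheory

/-- Points of the midplate `Ω ⊆ ℝ²`. -/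
abbrev E2 : Type := Fin 2 → ℝ
/-- Vectors in `ℝ³`. -/
abbrev V3 : Type := Fin 3 → ℝ
/-- `3×3` real arrays. -/
abbrev M3 : Type := Fin 3 → Fin 3 → ℝ
/-- `2×2` real arrays. -/
abbrev M2 : Type := Fin 2 → Fin 2 → ℝ

/-- Partial derivative `∂ᵢ` of a scalar field on `ℝ²`. -/
def pd2 (i : Fin 2) (f : E2 → ℝ) (x : E2) : ℝ := fderiv ℝ f x (Pi.single i 1)

/-- Partial derivative `∂ᵢ` of an `ℝ³`-valued field on `ℝ²`. -/
def pdv (i : Fin 2) (f : E2 → V3) (x : E2) : V3 := fderiv ℝ f x (Pi.single i 1)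

/-- Euclidean inner product on `ℝ³`. -/
def dot3 (u v : V3) : ℝ := ∑ k, u k * v k

/-- Matrix product of `3×3` arrays. -/
def mmul (A B : M3) : M3 := fun i j => ∑ k, A i k * B k j

/-- Transpose of a `3×3` array. -/
def transp (A : M3) : M3 := fun i j => A j i

/-- The identity `3×3` array. -/
def idm : M3 := fun i j => if i = j then 1 else 0

/-- Frobenius norm of a `3×3` array. -/
def fnorm (A : M3) : ℝ := Real.sqrt (∑ i, ∑ j, (A i j) ^ 2)

/-- Symmetry of a `3×3` array. -/
def SymM (A : M3) : Prop := ∀ i j, A i j = A j i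

/-- Positive definiteness of a `3×3` array. -/
def PosDefM (A : M3) : Prop := ∀ v : V3, v ≠ 0 → 0 < ∑ i, ∑ j, v i * A i j * v j

/-- The special orthogonal group `SO(3)`. -/
def SO3 : Set M3 := {R | mmul (transp R) R = idm ∧ (Matrix.of R).det = 1}

/-- Entries of the inverse of a `3×3` array. -/
def minv (A : M3) : M3 := fun i j => (Matrix.of A)⁻¹ i j

/-- The columns `∂₁y₀, ∂₂y₀, b₀` of the matrix `Q₀`. -/
def Qcol (y0 b0 : E2 → V3) (x : E2) : Fin 3 → V3 := ![pdv 0 y0 x, pdv 1 y0 x, b0 x]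

/-- The determinant of `Q₀`. -/
def Qdet (y0 b0 : E2 → V3) (x : E2) : ℝ := (Matrix.of fun a j => Qcol y0 b0 x j a).det

/-- Partial derivatives `∂₁, ∂₂, ∂₃` of an `x₃`-independent scalar field (so `∂₃ = 0`). -/
def pd3 (k : Fin 3) (f : E2 → ℝ) (x : E2) : ℝ :=
  if h : (k : ℕ) < 2 then pd2 ⟨(k : ℕ), h⟩ f x else 0

/-- Christoffel symbols `Γ^n_{kl}` of the (`x₃`-independent) metric `G`. -/
def Gamma (G : E2 → M3) (n k l : Fin 3) (x : E2) : ℝ :=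
  (1 / 2) * ∑ s, minv (G x) n s *
    (pd3 k (fun y => G y s l) x + pd3 l (fun y => G y s k) x - pd3 s (fun y => G y k l) x)

/-- Covariant Riemann curvatures `R_{iklm}` of the (`x₃`-independent) metric `G`;
indices are `0`-based, so e.g. `R_{1313} = Riem G 0 2 0 2`. -/
def Riem (G : E2 → M3) (i k l m : Fin 3) (x : E2) : ℝ :=
  (1 / 2) * (pd3 k (fun y => pd3 l (fun z => G z i m) y) x
           + pd3 i (fun y => pd3 m (fun z => G z k l) y) x
           - pd3 k (fun y => pd3 m (fun z => G z i l) y) x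
           - pd3 i (fun y => pd3 l (fun z => G z k m) y) x)
    + ∑ n, ∑ p, G x n p *
        (Gamma G n k l x * Gamma G p i m x - Gamma G n k m x * Gamma G p i l x)

/-- The deformation gradient `∇u = [∂₁u | ∂₂u | ∂₃u]` of `u : Ω^h → ℝ³`. -/
def gradu (u : E2 × ℝ → V3) (x : E2 × ℝ) : M3 :=
  fun a j => ![fderiv ℝ u x (Pi.single 0 1, 0),
               fderiv ℝ u x (Pi.single 1 1, 0),
               fderiv ℝ u x (0, 1)] j a

/-- The elastic energy `E^h(u) = (1/h) ∫_{Ω × (-h/2,h/2)} W(∇u A⁻¹)`. -/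
def Eh (W : M3 → ℝ≥0∞) (A : E2 → M3) (Ω : Set E2) (h : ℝ) (u : E2 × ℝ → V3) : ℝ≥0∞ :=
  (ENNReal.ofReal h)⁻¹ *
    ∫⁻ x in Ω ×ˢ Set.Ioo (-(h / 2)) (h / 2), W (mmul (gradu u x) (minv (A x.1)))

/-- Symmetric part of a `3×3` array. -/
def symM (A : M3) : M3 := fun i j => (A i j + A j i) / 2
/-- Symmetric part of a `2×2` array. -/
def sym2M (A : M2) : M2 := fun i j => (A i j + A j i) / 2
/-- `F₂*`: the `3×3` array with principal `2×2` minor `F₂` and all other entries `0`. -/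
def put (F2 : M2) : M3 :=
  fun i j => if h : (i : ℕ) < 2 ∧ (j : ℕ) < 2 then F2 ⟨i, h.1⟩ ⟨j, h.2⟩ else 0
/-- The tensor product `c ⊗ e₃`. -/
def tene3 (c : V3) : M3 := fun i j => if j = 2 then c i else 0
/-- Cross product in `ℝ³`. -/
def cross (u v : V3) : V3 :=
  ![u 1 * v 2 - u 2 * v 1, u 2 * v 0 - u 0 * v 2, u 0 * v 1 - u 1 * v 0]
/-- The quadratic form `Q₃(F) = D²W(Id₃)(F,F)`, for a density `w`. -/
def Q3d (w : M3 → ℝ) (F : M3) : ℝ := fderiv ℝ (fun P => fderiv ℝ w P F) idm F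
/-- The reduced quadratic form `Q_{2,A}(x', F₂)`:
the infimum of `Q₃(A⁻¹ F̃ A⁻¹)` over all `F̃` whose principal `2×2` minor is `F₂`. -/
def QA (w : M3 → ℝ) (A : E2 → M3) (x : E2) (F2 : M2) : ℝ :=
  ⨅ Ft : {Ft : M3 // ∀ i j : Fin 2, Ft i.castSucc j.castSucc = F2 i j},
    Q3d w (mmul (minv (A x)) (mmul Ft.1 (minv (A x))))

/-- A field that is `C¹` up to the boundary of a bounded open set has bounded derivative there. -/
theorem exists_fderiv_bound {E F : Type*} [NormedAddCommGroup E] [NormedSpace ℝ E] [ProperSpace E]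
    [NormedAddCommGroup F] [NormedSpace ℝ F] {Ω : Set E} (hΩo : IsOpen Ω)
    (hΩb : Bornology.IsBounded Ω) {f : E → F} (hf : ContDiffOn ℝ 1 f (closure Ω)) :
    ∃ C : ℝ, ∀ x ∈ Ω, ‖fderiv ℝ f x‖ ≤ C := by
  have hloc : ∃ C : ℝ, ∀ x ∈ closure Ω, x ∈ Ω → ‖fderiv ℝ f x‖ ≤ C := by
    refine hΩb.isCompact_closure.induction_on
      (p := fun s => ∃ C : ℝ, ∀ x ∈ s, x ∈ Ω → ‖fderiv ℝ f x‖ ≤ C) ⟨0, by simp⟩ ?_ ?_ ?_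
    · rintro s t hst ⟨C, hC⟩
      exact ⟨C, fun x hx => hC x (hst hx)⟩
    · rintro s t ⟨C, hC⟩ ⟨D, hD⟩
      refine ⟨max C D, fun x hx hxΩ => ?_⟩
      rcases hx with hx | hx
      · exact (hC x hx hxΩ).trans (le_max_left _ _)
      · exact (hD x hx hxΩ).trans (le_max_right _ _)
    · intro x hx
      have h1 : ContDiffWithinAt ℝ (0 + 1) f (closure Ω) x := by simpa using hf x hx
      obtain ⟨u, hu, -, -, f', hf', hcont⟩ :=
        (contDiffWithinAt_succ_iff_hasFDerivWithinAt' (by simp)).mp h1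
      rw [Set.insert_eq_of_mem hx] at hu
      have hbd : ∀ᶠ y in 𝓝[closure Ω] x, ‖f' y‖ < ‖f' x‖ + 1 :=
        hcont.continuousWithinAt.norm.eventually (gt_mem_nhds (lt_add_one _))
      refine ⟨u ∩ {y | ‖f' y‖ < ‖f' x‖ + 1}, inter_mem hu hbd, ‖f' x‖ + 1, ?_⟩
      rintro y ⟨hyu, hy⟩ hyΩ
      have hd : HasFDerivAt f (f' y) y :=
        (hf' y hyu).hasFDerivAt (mem_of_superset (hΩo.mem_nhds hyΩ) subset_closure)
      rw [hd.fderiv]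
      exact le_of_lt hy
  obtain ⟨C, hC⟩ := hloc
  exact ⟨C, fun x hx => hC x (subset_closure hx) hx⟩

/-- A `C²` function with a local minimum of value zero grows at most quadratically. -/
theorem exists_quadratic_bound_of_isLocalMin {E : Type*} [NormedAddCommGroup E] [NormedSpace ℝ E]
    {f : E → ℝ} {a : E} (hf : ContDiffAt ℝ 2 f a) (hmin : IsLocalMin f a) (h0 : f a = 0) :
    ∃ L δ : ℝ, 0 ≤ L ∧ 0 < δ ∧ ∀ e : E, ‖e‖ ≤ δ → f (a + e) ≤ L * ‖e‖ ^ 2 := by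
  have hd0 : fderiv ℝ f a = 0 := hmin.fderiv_eq_zero
  obtain ⟨K, t, ht, hK⟩ :=
    (hf.fderiv_right (m := 1) (by norm_num)).exists_lipschitzOnWith
  have hdiff : ∀ᶠ x in 𝓝 a, DifferentiableAt ℝ f x :=
    (hf.eventually (by simp)).mono fun x hx => hx.differentiableAt (by simp)
  obtain ⟨δ, hδ, hball⟩ := Metric.nhds_basis_closedBall.mem_iff.mp (inter_mem ht hdiff)
  refine ⟨K, δ, K.2, hδ, fun e he => ?_⟩
  have hsub : Metric.closedBall a ‖e‖ ⊆ Metric.closedBall a δ :=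
    Metric.closedBall_subset_closedBall he
  have hat : a ∈ t := (hball (Metric.mem_closedBall_self hδ.le)).1
  have hmv := Convex.norm_image_sub_le_of_norm_fderiv_le (𝕜 := ℝ) (f := f) (C := K * ‖e‖)
    (s := Metric.closedBall a ‖e‖) (x := a) (y := a + e)
    (fun x hx => (hball (hsub hx)).2)
    (fun x hx => by
      have hx' := hK.dist_le_mul x (hball (hsub hx)).1 a hat
      rw [hd0, dist_zero_right] at hx'
      exact hx'.trans (mul_le_mul_of_nonneg_left (Metric.mem_closedBall.mp hx) K.2))
    (convex_closedBall _ _) (Metric.mem_closedBall_self (norm_nonneg _)) (by simp)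
  rw [h0, sub_zero, add_sub_cancel_left] at hmv
  calc f (a + e) ≤ ‖f (a + e)‖ := Real.le_norm_self _
    _ ≤ K * ‖e‖ * ‖e‖ := hmv
    _ = K * ‖e‖ ^ 2 := by ring

/-- Entrywise bound for a product of `3×3` matrices. -/
theorem abs_mul_entry_le {A B : Matrix (Fin 3) (Fin 3) ℝ} {a b : ℝ}
    (hA : ∀ i j, |A i j| ≤ a) (hB : ∀ i j, |B i j| ≤ b) (i j : Fin 3) :
    |(A * B) i j| ≤ 3 * (a * b) := by
  have ha : 0 ≤ a := (abs_nonneg _).trans (hA 0 0)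
  rw [Matrix.mul_apply]
  calc |∑ k, A i k * B k j| ≤ ∑ k, |A i k * B k j| := Finset.abs_sum_le_sum_abs _ _
    _ ≤ ∑ _k : Fin 3, a * b := Finset.sum_le_sum fun k _ => by
        rw [abs_mul]
        exact mul_le_mul (hA i k) (hB k j) (abs_nonneg _) ha
    _ = 3 * (a * b) := by simp

/-- Entries of an orthogonal matrix are at most one in absolute value. -/
theorem abs_entry_le_one_of_transpose_mul_self {R : Matrix (Fin 3) (Fin 3) ℝ}
    (hR : R.transpose * R = 1) (i j : Fin 3) : |R i j| ≤ 1 := by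
  have h : ∑ k, R k j * R k j = 1 := by
    have := congrFun (congrFun hR j) j
    simpa [Matrix.mul_apply] using this
  have h1 : R i j * R i j ≤ ∑ k, R k j * R k j :=
    Finset.single_le_sum (f := fun k => R k j * R k j) (fun k _ => mul_self_nonneg _)
      (Finset.mem_univ i)
  rw [abs_le_one_iff_mul_self_le_one]
  linarith

/-- The Cayley transform of a skew-symmetric `K` is a rotation agreeing with `1 + 2K` up to
a remainder quadratic in `K`. -/
theorem exists_rotation_of_skew {K : Matrix (Fin 3) (Fin 3) ℝ} (hK : K.transpose = -K) :
    ∃ R : Matrix (Fin 3) (Fin 3) ℝ, R.transpose * R = 1 ∧ R.det = 1 ∧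
      R = 1 + 2 • K + K * K * (1 + R) := by
  have hent : ∀ i j, K j i = -K i j := fun i j => congrFun (congrFun hK i) j
  have hdet : (1 - K).det ≠ 0 := by
    have h00 := hent 0 0
    have h11 := hent 1 1
    have h22 := hent 2 2
    have e0 : K 0 0 = 0 := by linarith
    have e1 : K 1 1 = 0 := by linarith
    have e2 : K 2 2 = 0 := by linarith
    have : (1 - K).det = 1 + K 0 1 ^ 2 + K 0 2 ^ 2 + K 1 2 ^ 2 := by
      rw [Matrix.det_fin_three]
      simp [e0, e1, e2, hent 0 1, hent 0 2, hent 1 2]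
      ring
    rw [this]
    positivity
  have hT : (1 - K).transpose = 1 + K := by
    rw [Matrix.transpose_sub, Matrix.transpose_one, hK, sub_neg_eq_add]
  have hT' : (1 + K).transpose = 1 - K := by
    rw [Matrix.transpose_add, Matrix.transpose_one, hK, sub_eq_add_neg]
  have hdet' : (1 + K).det = (1 - K).det := by rw [← hT, Matrix.det_transpose]
  have hu : IsUnit (1 - K).det := isUnit_iff_ne_zero.mpr hdet
  have hu' : IsUnit (1 + K).det := by rwa [hdet']
  have hcomm : (1 - K) * (1 + K) = (1 + K) * (1 - K) := by noncomm_ring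
  refine ⟨(1 + K) * (1 - K)⁻¹, ?_, ?_, ?_⟩
  · rw [Matrix.transpose_mul, Matrix.transpose_nonsing_inv, hT, hT']
    calc (1 + K)⁻¹ * (1 - K) * ((1 + K) * (1 - K)⁻¹)
        = (1 + K)⁻¹ * ((1 - K) * (1 + K)) * (1 - K)⁻¹ := by simp only [Matrix.mul_assoc]
      _ = (1 + K)⁻¹ * (1 + K) * ((1 - K) * (1 - K)⁻¹) := by
          rw [hcomm]; simp only [Matrix.mul_assoc]
      _ = 1 := by rw [Matrix.nonsing_inv_mul _ hu', Matrix.mul_nonsing_inv _ hu, one_mul]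
  · rw [Matrix.det_mul, hdet', ← Matrix.det_mul, Matrix.mul_nonsing_inv _ hu, Matrix.det_one]
  · have hinv : (1 - K) * (1 - K)⁻¹ = 1 := Matrix.mul_nonsing_inv _ hu
    generalize (1 - K)⁻¹ = N at hinv
    have hN : N = 1 + K * N := by
      rw [sub_mul, one_mul, sub_eq_iff_eq_add] at hinv
      exact hinv
    have hR : (1 + K) * N = 1 + 2 • (K * N) := by
      calc (1 + K) * N = N + K * N := by noncomm_ring
        _ = (1 + K * N) + K * N := by rw [← hN]
        _ = 1 + 2 • (K * N) := by abel
    calc (1 + K) * N = 1 + 2 • (K * N) := hR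
      _ = 1 + 2 • (K * (1 + K * (1 + K * N))) := by rw [← hN, ← hN]
      _ = 1 + 2 • K + K * K * (1 + (1 + 2 • (K * N))) := by noncomm_ring
      _ = _ := by rw [hR]

/-- Rotating the linearly-in-`t` perturbed frame `Q + t B + (t²/2) D`, with `Qᵀ B`
skew-symmetric, measured against the square root `A` of the metric `Qᵀ Q`, gives the identity
up to a remainder of order `t²`. -/
theorem exists_rotation_frame {Q B D A : Matrix (Fin 3) (Fin 3) ℝ} {a b t : ℝ}
    (hAsym : A.transpose = A) (hAdet : 0 < A.det) (hAQ : A * A = Q.transpose * Q)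
    (hQdet : 0 < Q.det) (hskew : (Q.transpose * B).transpose = -(Q.transpose * B))
    (hN : ∀ i j, |A⁻¹ i j| ≤ a) (hB : ∀ i j, |B i j| ≤ b) (hD : ∀ i j, |D i j| ≤ b) :
    ∃ P M : Matrix (Fin 3) (Fin 3) ℝ, P.transpose * P = 1 ∧ P.det = 1 ∧
      P * ((Q + t • B + (t ^ 2 / 2) • D) * A⁻¹) = 1 + t ^ 2 • M ∧
      ∀ i j, |M i j| ≤ 3 * (9 * (a * b) + 5 * (9 * (a * b)) ^ 2) := by
  have hu : IsUnit A.det := isUnit_iff_ne_zero.mpr hAdet.ne'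
  have hNsym : A⁻¹.transpose = A⁻¹ := by rw [Matrix.transpose_nonsing_inv, hAsym]
  have hAN : A * A⁻¹ = 1 := Matrix.mul_nonsing_inv _ hu
  have hNA : A⁻¹ * A = 1 := Matrix.nonsing_inv_mul _ hu
  generalize A⁻¹ = N at *
  have hR0 : (Q * N).transpose * (Q * N) = 1 := by
    rw [Matrix.transpose_mul, hNsym]
    calc N * Q.transpose * (Q * N) = N * (Q.transpose * Q) * N := by simp only [Matrix.mul_assoc]
      _ = N * A * (A * N) := by rw [← hAQ]; simp only [Matrix.mul_assoc]
      _ = 1 := by rw [hNA, hAN, one_mul]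
  have hNdet : 0 < N.det := by
    have h : A.det * N.det = 1 := by rw [← Matrix.det_mul, hAN, Matrix.det_one]
    exact (pos_iff_pos_of_mul_pos (by rw [h]; exact one_pos)).mp hAdet
  have hR0det : (Q * N).det = 1 := by
    have h := congrArg Matrix.det hR0
    rw [Matrix.det_mul, Matrix.det_transpose, Matrix.det_one] at h
    have hpos : 0 < (Q * N).det := by rw [Matrix.det_mul]; exact mul_pos hQdet hNdet
    nlinarith
  have hR0' : ∀ i j, |(Q * N).transpose i j| ≤ 1 := fun i j =>
    abs_entry_le_one_of_transpose_mul_self hR0 j i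
  set R0 := Q * N with hR0def
  set S := R0.transpose * (B * N) with hS
  set T := (1 / 2 : ℝ) • (R0.transpose * (D * N)) with hT
  have hb : 0 ≤ b := (abs_nonneg _).trans (hB 0 0)
  have ha : 0 ≤ a := (abs_nonneg _).trans (hN 0 0)
  have hab : 0 ≤ a * b := mul_nonneg ha hb
  have hSb : ∀ i j, |S i j| ≤ 9 * (a * b) := fun i j =>
    (abs_mul_entry_le hR0' (abs_mul_entry_le hB hN) i j).trans (le_of_eq (by ring))
  have hTb : ∀ i j, |T i j| ≤ 9 * (a * b) := fun i j => by
    have h := abs_mul_entry_le hR0' (abs_mul_entry_le hD hN) i j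
    rw [hT, Matrix.smul_apply, smul_eq_mul, abs_mul, abs_of_pos (by norm_num : (0 : ℝ) < 1 / 2)]
    linarith
  have hSskew : S.transpose = -S := by
    have h : S = N * (Q.transpose * B) * N := by
      rw [hS, hR0def, Matrix.transpose_mul, hNsym]
      simp only [Matrix.mul_assoc]
    rw [h, Matrix.transpose_mul, Matrix.transpose_mul, hNsym, hskew]
    noncomm_ring
  obtain ⟨R, hR, hRdet, hReq⟩ := exists_rotation_of_skew (K := (t / 2) • S)
    (by rw [Matrix.transpose_smul, hSskew, smul_neg])
  have hRb := abs_entry_le_one_of_transpose_mul_self hR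
  refine ⟨R.transpose * R0.transpose, R.transpose * (T - (1 / 4 : ℝ) • (S * S * (1 + R))),
    ?_, ?_, ?_, ?_⟩
  · have hR' : R * R.transpose = 1 := mul_eq_one_comm.mp hR
    have hR0'' : R0 * R0.transpose = 1 := mul_eq_one_comm.mp hR0
    rw [Matrix.transpose_mul, Matrix.transpose_transpose, Matrix.transpose_transpose]
    calc R0 * R * (R.transpose * R0.transpose) = R0 * (R * R.transpose) * R0.transpose := by
          simp only [Matrix.mul_assoc]
      _ = 1 := by rw [hR', mul_one, hR0'']
  · rw [Matrix.det_mul, Matrix.det_transpose, Matrix.det_transpose, hRdet, hR0det, one_mul]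
  · have h1 : R0.transpose * ((Q + t • B + (t ^ 2 / 2) • D) * N) = 1 + t • S + t ^ 2 • T := by
      rw [Matrix.add_mul, Matrix.add_mul, Matrix.mul_add, Matrix.mul_add, ← hR0def, hR0,
        Matrix.smul_mul, Matrix.smul_mul, Matrix.mul_smul, Matrix.mul_smul, ← hS, hT, smul_smul]
      congr 2
      ring
    have h2 : (1 : Matrix (Fin 3) (Fin 3) ℝ) + t • S + t ^ 2 • T
        = R + t ^ 2 • (T - (1 / 4 : ℝ) • (S * S * (1 + R))) := by
      have h3 : R = 1 + t • S + (t ^ 2 / 4) • (S * S * (1 + R)) := by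
        conv_lhs => rw [hReq]
        rw [Matrix.smul_mul, Matrix.mul_smul, Matrix.smul_mul, Matrix.smul_mul]
        module
      conv_rhs => rw [smul_sub, smul_smul]; arg 1; rw [h3]
      module
    rw [Matrix.mul_assoc, h1, h2, Matrix.mul_add, hR, Matrix.mul_smul]
  · have h1R : ∀ i j, |(1 + R) i j| ≤ 2 := fun i j => by
      have h1 : |(1 : Matrix (Fin 3) (Fin 3) ℝ) i j| ≤ 1 := by
        rw [Matrix.one_apply]; split_ifs <;> simp
      rw [Matrix.add_apply]
      linarith [abs_add_le ((1 : Matrix (Fin 3) (Fin 3) ℝ) i j) (R i j), hRb i j]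
    have hV : ∀ i j, |(T - (1 / 4 : ℝ) • (S * S * (1 + R))) i j|
        ≤ 9 * (a * b) + 5 * (9 * (a * b)) ^ 2 := fun i j => by
      have h := abs_mul_entry_le (abs_mul_entry_le hSb hSb) h1R i j
      rw [Matrix.sub_apply, Matrix.smul_apply, smul_eq_mul]
      have h4 := abs_sub (T i j) (1 / 4 * (S * S * (1 + R)) i j)
      rw [abs_mul, abs_of_pos (by norm_num : (0 : ℝ) < 1 / 4)] at h4
      nlinarith [hTb i j]
    intro i j
    exact (abs_mul_entry_le (A := R.transpose) (a := 1) (fun i j => hRb j i) hV i j).trans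
      (le_of_eq (by ring))

theorem of_mmul (A B : M3) : Matrix.of (mmul A B) = Matrix.of A * Matrix.of B := by
  rfl

theorem of_idm : Matrix.of idm = 1 := by
  ext i j
  exact (Matrix.one_apply).symm

theorem mem_SO3_iff (R : M3) :
    R ∈ SO3 ↔ (Matrix.of R).transpose * Matrix.of R = 1 ∧ (Matrix.of R).det = 1 := by
  have h : Matrix.of (mmul (transp R) R) = (Matrix.of R).transpose * Matrix.of R :=
    of_mmul (transp R) R
  rw [← h, ← of_idm, Matrix.of.injective.eq_iff]
  rfl

theorem isClosed_SO3 : IsClosed SO3 := by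
  have h1 : Continuous fun R : M3 => mmul (transp R) R := by
    unfold mmul transp
    fun_prop
  have h2 : Continuous fun R : M3 => (Matrix.of R).det := Continuous.matrix_det continuous_id
  exact (isClosed_eq h1 continuous_const).inter (isClosed_eq h2 continuous_const)

theorem idm_mem_SO3 : idm ∈ SO3 := by
  simp [mem_SO3_iff, of_idm]

/-- Nonnegativity of the real representative of a density with quadratic growth off `SO(3)`. -/
theorem density_nonneg {W : M3 → ℝ≥0∞} {c : ℝ} (hc : 0 < c)
    (hWgrow : ∀ F : M3, ENNReal.ofReal (c * Metric.infDist F SO3 ^ 2) ≤ W F)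
    {U : Set M3} (hUopen : IsOpen U) {Wr : M3 → ℝ} (hWr : ContinuousOn Wr U)
    (hWrep : ∀ F ∈ U, W F = ENNReal.ofReal (Wr F)) {F : M3} (hF : F ∈ U) : 0 ≤ Wr F := by
  have hoff : ∀ P ∈ U, P ∉ SO3 → 0 ≤ Wr P := fun P hP hPS => by
    have hd : 0 < Metric.infDist P SO3 :=
      (isClosed_SO3.notMem_iff_infDist_pos ⟨_, idm_mem_SO3⟩).mp hPS
    have h := hWgrow P
    rw [hWrep P hP] at h
    have h1 : 0 < ENNReal.ofReal (Wr P) :=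
      lt_of_lt_of_le (ENNReal.ofReal_pos.mpr (by positivity)) h
    exact (ENNReal.ofReal_pos.mp h1).le
  by_cases hFS : F ∈ SO3
  · have hlim : Tendsto (fun s : ℝ => s • F) (𝓝[>] 1) (𝓝 F) := by
      have h : Continuous fun s : ℝ => s • F := by fun_prop
      have h1 := h.tendsto 1
      rw [one_smul] at h1
      exact h1.mono_left nhdsWithin_le_nhds
    have hWlim := ((hWr.continuousAt (hUopen.mem_nhds hF)).tendsto).comp hlim
    refine ge_of_tendsto hWlim ?_
    filter_upwards [hlim.eventually (hUopen.mem_nhds hF), self_mem_nhdsWithin] with s hs hs1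
    refine hoff _ hs fun hmem => ?_
    have h1 : (Matrix.of F).det = 1 := hFS.2
    have h2 : (s • Matrix.of F).det = 1 := hmem.2
    rw [Matrix.det_smul, h1, mul_one] at h2
    exact (one_lt_pow₀ (Set.mem_Ioi.mp hs1) (by simp)).ne' h2
  · exact hoff F hF hFS

/-- The energy density grows at most quadratically near the identity. -/
theorem exists_density_quadratic_bound {W : M3 → ℝ≥0∞} {c : ℝ} (hc : 0 < c)
    (hW0 : ∀ R ∈ SO3, W R = 0)
    (hWgrow : ∀ F : M3, ENNReal.ofReal (c * Metric.infDist F SO3 ^ 2) ≤ W F)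
    {U : Set M3} (hUopen : IsOpen U) (hUSO3 : SO3 ⊆ U) {Wr : M3 → ℝ}
    (hWrC2 : ContDiffOn ℝ 2 Wr U) (hWrep : ∀ F ∈ U, W F = ENNReal.ofReal (Wr F)) :
    ∃ L δ : ℝ, 0 ≤ L ∧ 0 < δ ∧
      ∀ e : M3, ‖e‖ ≤ δ → W (idm + e) ≤ ENNReal.ofReal (L * ‖e‖ ^ 2) := by
  have hU : U ∈ 𝓝 idm := hUopen.mem_nhds (hUSO3 idm_mem_SO3)
  have hnn : ∀ F ∈ U, 0 ≤ Wr F := fun F hF =>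
    density_nonneg hc hWgrow hUopen hWrC2.continuousOn hWrep hF
  have h0 : Wr idm = 0 := by
    have h := hWrep idm (hUSO3 idm_mem_SO3)
    rw [hW0 _ idm_mem_SO3] at h
    exact le_antisymm (ENNReal.ofReal_eq_zero.mp h.symm) (hnn _ (hUSO3 idm_mem_SO3))
  have hmin : IsLocalMin Wr idm := by
    filter_upwards [hU] with F hF
    rw [h0]
    exact hnn F hF
  obtain ⟨L, δ, hL, hδ, hb⟩ :=
    exists_quadratic_bound_of_isLocalMin (hWrC2.contDiffAt hU) hmin h0
  obtain ⟨ε, hε, hball⟩ := Metric.nhds_basis_closedBall.mem_iff.mp hU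
  refine ⟨L, min δ ε, hL, lt_min hδ hε, fun e he => ?_⟩
  have hmem : idm + e ∈ U := hball (by simpa using he.trans (min_le_right _ _))
  rw [hWrep _ hmem]
  exact ENNReal.ofReal_le_ofReal (hb e (he.trans (min_le_left _ _)))

theorem det_pos_of_PosDefM {A : M3} (hs : SymM A) (hp : PosDefM A) : 0 < (Matrix.of A).det := by
  refine Matrix.PosDef.det_pos (Matrix.PosDef.of_dotProduct_mulVec_pos ?_ fun v hv => ?_)
  · ext i j
    simpa using hs j i
  · have h := hp v hv
    simp only [dotProduct, Matrix.mulVec, Finset.mul_sum, star_trivial, Matrix.of_apply]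
    simpa only [mul_assoc] using h

/-- The inverse square root of a continuous metric is bounded on compact sets. -/
theorem exists_inv_sqrt_bound {X : Type*} [TopologicalSpace X] {s : Set X} (hs : IsCompact s)
    {G A : X → M3} (hG : ContinuousOn G s)
    (hA : ∀ x ∈ s, SymM (A x) ∧ PosDefM (A x) ∧ mmul (A x) (A x) = G x) :
    ∃ a : ℝ, ∀ x ∈ s, ∀ i j, |(Matrix.of (A x))⁻¹ i j| ≤ a := by
  have hdetA : ∀ x ∈ s, 0 < (Matrix.of (A x)).det := fun x hx =>
    det_pos_of_PosDefM (hA x hx).1 (hA x hx).2.1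
  have hGA : ∀ x ∈ s, Matrix.of (G x) = Matrix.of (A x) * Matrix.of (A x) := fun x hx => by
    rw [← (hA x hx).2.2]
    exact of_mmul (A x) (A x)
  have hdetG : ∀ x ∈ s, (Matrix.of (G x)).det ≠ 0 := fun x hx => by
    rw [hGA x hx, Matrix.det_mul]
    exact (mul_pos (hdetA x hx) (hdetA x hx)).ne'
  have hcont : ContinuousOn (fun x => (Matrix.of (G x)).det⁻¹ • (Matrix.of (G x)).adjugate) s := by
    have h1 : Continuous fun M : M3 => (Matrix.of M).det := Continuous.matrix_det continuous_id
    have h2 : Continuous fun M : M3 => (Matrix.of M).adjugate :=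
      Continuous.matrix_adjugate continuous_id
    exact ((h1.comp_continuousOn hG).inv₀ hdetG).smul (h2.comp_continuousOn hG)
  have htr : ContinuousOn
      (fun x => ((Matrix.of (G x)).det⁻¹ • (Matrix.of (G x)).adjugate).trace) s :=
    (Continuous.matrix_trace continuous_id).comp_continuousOn hcont
  obtain ⟨C, hC⟩ := hs.exists_bound_of_continuousOn htr
  refine ⟨C + 1, fun x hx i j => ?_⟩
  have hCx := hC x hx
  have hinv : (Matrix.of (G x)).det⁻¹ • (Matrix.of (G x)).adjugate
      = (Matrix.of (A x))⁻¹ * (Matrix.of (A x))⁻¹ := by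
    rw [← Matrix.mul_inv_rev, ← hGA x hx, Matrix.inv_def, Ring.inverse_eq_inv']
  have hsym : (Matrix.of (A x))⁻¹.transpose = (Matrix.of (A x))⁻¹ := by
    rw [Matrix.transpose_nonsing_inv]
    congr 1
    ext i j
    exact (hA x hx).1 j i
  rw [hinv] at hCx
  generalize (Matrix.of (A x))⁻¹ = N at *
  have hNent : ∀ k l, N k l = N l k := fun k l => congrFun (congrFun hsym l) k
  have hsum : (N * N).trace = ∑ k, ∑ l, N k l ^ 2 := by
    simp only [Matrix.trace, Matrix.diag, Matrix.mul_apply]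
    refine Finset.sum_congr rfl fun k _ => Finset.sum_congr rfl fun l _ => ?_
    rw [hNent l k, sq]
  have hle : N i j ^ 2 ≤ (N * N).trace := by
    rw [hsum]
    calc N i j ^ 2 ≤ ∑ l, N i l ^ 2 :=
          Finset.single_le_sum (f := fun l => N i l ^ 2) (fun l _ => sq_nonneg _)
            (Finset.mem_univ j)
      _ ≤ _ := Finset.single_le_sum (f := fun k => ∑ l, N k l ^ 2)
            (fun k _ => Finset.sum_nonneg fun l _ => sq_nonneg _) (Finset.mem_univ i)
  have hle' : N i j ^ 2 ≤ C := hle.trans ((Real.le_norm_self _).trans hCx)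
  rw [← sq_abs] at hle'
  nlinarith [sq_nonneg (|N i j| - 1), abs_nonneg (N i j)]

/-- The gradient of `y₀ + x₃ b₀ + (x₃²/2) d₀`. -/
theorem gradu_plate {y0 b0 d0 : E2 → V3} {x : E2} (t : ℝ) (hy : DifferentiableAt ℝ y0 x)
    (hb : DifferentiableAt ℝ b0 x) (hd : DifferentiableAt ℝ d0 x) :
    Matrix.of (gradu (fun z : E2 × ℝ => fun a =>
        y0 z.1 a + z.2 * b0 z.1 a + z.2 ^ 2 / 2 * d0 z.1 a) (x, t))
      = (Matrix.of fun a j => Qcol y0 b0 x j a)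
        + t • (Matrix.of fun a j => (![pdv 0 b0 x, pdv 1 b0 x, d0 x] : Fin 3 → V3) j a)
        + (t ^ 2 / 2) •
          (Matrix.of fun a j => (![pdv 0 d0 x, pdv 1 d0 x, 0] : Fin 3 → V3) j a) := by
  have hfst : HasFDerivAt (Prod.fst : E2 × ℝ → E2) (ContinuousLinearMap.fst ℝ E2 ℝ) (x, t) :=
    hasFDerivAt_fst
  have hsnd : HasFDerivAt (Prod.snd : E2 × ℝ → ℝ) (ContinuousLinearMap.snd ℝ E2 ℝ) (x, t) :=
    hasFDerivAt_snd
  have hsq : HasFDerivAt (fun z : E2 × ℝ => z.2 ^ 2 / 2)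
      (t • ContinuousLinearMap.snd ℝ E2 ℝ) (x, t) := by
    have h1 : HasDerivAt (fun s : ℝ => s ^ 2 / 2) t t := by
      simpa using (hasDerivAt_pow 2 t).div_const 2
    exact h1.comp_hasFDerivAt (x, t) hsnd
  have hY : HasFDerivAt (fun z : E2 × ℝ => y0 z.1) _ (x, t) :=
    HasFDerivAt.comp (x, t) hy.hasFDerivAt hfst
  have hB : HasFDerivAt (fun z : E2 × ℝ => b0 z.1) _ (x, t) :=
    HasFDerivAt.comp (x, t) hb.hasFDerivAt hfst
  have hD : HasFDerivAt (fun z : E2 × ℝ => d0 z.1) _ (x, t) :=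
    HasFDerivAt.comp (x, t) hd.hasFDerivAt hfst
  have h := (hY.add (hsnd.smul hB)).add (hsq.smul hD)
  have hu : fderiv ℝ (fun z : E2 × ℝ => fun a =>
      y0 z.1 a + z.2 * b0 z.1 a + z.2 ^ 2 / 2 * d0 z.1 a) (x, t) = _ := h.fderiv
  ext a j
  simp only [Matrix.add_apply, Matrix.smul_apply, Matrix.of_apply, gradu, hu]
  fin_cases j <;> simp [Qcol, pdv]

/-- Entrywise bound of a matrix given by three columns. -/
theorem abs_columns_le {u v w : V3} {b : ℝ} (hu : ‖u‖ ≤ b) (hv : ‖v‖ ≤ b) (hw : ‖w‖ ≤ b)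
    (i j : Fin 3) : |(Matrix.of fun a j => (![u, v, w] : Fin 3 → V3) j a) i j| ≤ b := by
  fin_cases j
  · exact (norm_le_pi_norm u i).trans hu
  · exact (norm_le_pi_norm v i).trans hv
  · exact (norm_le_pi_norm w i).trans hw

theorem norm_pdv_le {f : E2 → V3} {x : E2} {C : ℝ} (h : ‖fderiv ℝ f x‖ ≤ C) (i : Fin 2) :
    ‖pdv i f x‖ ≤ C := by
  have h1 := (fderiv ℝ f x).le_opNorm (Pi.single i 1)
  rw [Pi.norm_single, norm_one, mul_one] at h1
  exact h1.trans h

/-- The first-order part of the plate frame is skew-symmetric in the metric. -/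
theorem transpose_plate_frame_skew {y0 b0 d0 : E2 → V3} {x : E2}
    (hsym0 : ∀ i j : Fin 2,
      dot3 (pdv i y0 x) (pdv j b0 x) + dot3 (pdv j y0 x) (pdv i b0 x) = 0)
    (hd0 : (∀ i : Fin 2,
      dot3 (Qcol y0 b0 x i.castSucc) (d0 x) = - dot3 (pdv i b0 x) (b0 x)) ∧
      dot3 (Qcol y0 b0 x 2) (d0 x) = 0) :
    ((Matrix.of fun a j => Qcol y0 b0 x j a).transpose *
      (Matrix.of fun a j => (![pdv 0 b0 x, pdv 1 b0 x, d0 x] : Fin 3 → V3) j a)).transpose =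
    -((Matrix.of fun a j => Qcol y0 b0 x j a).transpose *
      (Matrix.of fun a j => (![pdv 0 b0 x, pdv 1 b0 x, d0 x] : Fin 3 → V3) j a)) := by
  obtain ⟨hd, hd2⟩ := hd0
  have h0 := hd 0
  have h1 := hd 1
  have s00 := hsym0 0 0
  have s01 := hsym0 0 1
  have s11 := hsym0 1 1
  simp only [dot3, Qcol, Fin.sum_univ_three] at h0 h1 hd2 s00 s01 s11
  simp at h0 h1 hd2
  ext i j
  fin_cases i <;> fin_cases j <;>
    simp [Matrix.mul_apply, Fin.sum_univ_three, Qcol] <;> linarith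

/-- The frame `Q₀` represents the metric. -/
theorem transpose_mul_frame {G : E2 → M3} {y0 b0 : E2 → V3} {x : E2}
    (hQ0 : ∀ i j : Fin 3, dot3 (Qcol y0 b0 x i) (Qcol y0 b0 x j) = G x i j) :
    (Matrix.of fun a j => Qcol y0 b0 x j a).transpose *
      (Matrix.of fun a j => Qcol y0 b0 x j a) = Matrix.of (G x) := by
  ext i j
  rw [Matrix.of_apply, ← hQ0 i j]
  rfl

/-- Pointwise density estimate: the deformation gradient of the plate ansatz has energy density
of order `h⁴`. -/
theorem plate_density_le {W : M3 → ℝ≥0∞} (hWfr : ∀ R ∈ SO3, ∀ F : M3, W (mmul R F) = W F)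
    {L δ a b m h t : ℝ} (hL : 0 ≤ L)
    (hW : ∀ e : M3, ‖e‖ ≤ δ → W (idm + e) ≤ ENNReal.ofReal (L * ‖e‖ ^ 2))
    {Q B D : Matrix (Fin 3) (Fin 3) ℝ} {A F : M3}
    (hAsym : SymM A) (hApos : PosDefM A) (hAQ : Matrix.of (mmul A A) = Q.transpose * Q)
    (hQdet : 0 < Q.det) (hskew : (Q.transpose * B).transpose = -(Q.transpose * B))
    (hN : ∀ i j, |(Matrix.of A)⁻¹ i j| ≤ a) (hB : ∀ i j, |B i j| ≤ b) (hD : ∀ i j, |D i j| ≤ b)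
    (hm : 3 * (9 * (a * b) + 5 * (9 * (a * b)) ^ 2) ≤ m) (hth : |t| ≤ h) (hδ : h ^ 2 * m ≤ δ)
    (hF : Matrix.of F = Q + t • B + (t ^ 2 / 2) • D) :
    W (mmul F (minv A)) ≤ ENNReal.ofReal (L * m ^ 2 * h ^ 4) := by
  obtain ⟨P, M, hP, hPdet, hPM, hM⟩ := exists_rotation_frame (t := t)
    (by ext i j; exact hAsym j i) (det_pos_of_PosDefM hAsym hApos)
    ((of_mmul A A).symm.trans hAQ) hQdet hskew hN hB hD
  have hm0 : 0 ≤ m := ((abs_nonneg _).trans (hM 0 0)).trans hm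
  have ht2 : t ^ 2 ≤ h ^ 2 := sq_le_sq' (abs_le.mp hth).1 (abs_le.mp hth).2
  obtain ⟨R, rfl⟩ := Matrix.of.surjective P
  obtain ⟨e, he⟩ := Matrix.of.surjective (t ^ 2 • M)
  have heq : mmul R (mmul F (minv A)) = idm + e := by
    apply Matrix.of.injective
    have hinv : Matrix.of (minv A) = (Matrix.of A)⁻¹ := rfl
    rw [of_mmul, of_mmul, hF, hinv, hPM, ← he, ← of_idm]
    rfl
  have hle : ‖e‖ ≤ h ^ 2 * m := by
    have hnn : 0 ≤ h ^ 2 * m := by positivity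
    refine (pi_norm_le_iff_of_nonneg hnn).mpr fun i => (pi_norm_le_iff_of_nonneg hnn).mpr fun j => ?_
    have hij : e i j = t ^ 2 * M i j := congrFun (congrFun he i) j
    rw [hij, Real.norm_eq_abs, abs_mul, abs_of_nonneg (sq_nonneg t)]
    exact mul_le_mul ht2 ((hM i j).trans hm) (abs_nonneg _) (sq_nonneg h)
  rw [← hWfr R ((mem_SO3_iff R).mpr ⟨hP, hPdet⟩), heq]
  refine (hW e (hle.trans hδ)).trans (ENNReal.ofReal_le_ofReal ?_)
  calc L * ‖e‖ ^ 2 ≤ L * (h ^ 2 * m) ^ 2 := by gcongr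
    _ = L * m ^ 2 * h ^ 4 := by ring

/-- A uniform bound on the density over the thin plate bounds the averaged energy. -/
theorem Eh_le_of_density_le {W : M3 → ℝ≥0∞} {A : E2 → M3} {Ω : Set E2} (hΩo : IsOpen Ω)
    (hΩb : Bornology.IsBounded Ω) {h K : ℝ} (hh : 0 < h) (hK : 0 ≤ K) {u : E2 × ℝ → V3}
    (hd : ∀ x ∈ Ω ×ˢ Set.Ioo (-(h / 2)) (h / 2),
      W (mmul (gradu u x) (minv (A x.1))) ≤ ENNReal.ofReal K) :
    Eh W A Ω h u ≤ ENNReal.ofReal (K * volume.real Ω) := by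
  have hmeas : MeasurableSet (Ω ×ˢ Set.Ioo (-(h / 2)) (h / 2)) :=
    (hΩo.prod isOpen_Ioo).measurableSet
  have hvol : volume (Ω ×ˢ Set.Ioo (-(h / 2)) (h / 2))
      = ENNReal.ofReal (volume.real Ω) * ENNReal.ofReal h := by
    rw [Measure.volume_eq_prod, Measure.prod_prod, Real.volume_Ioo,
      ofReal_measureReal hΩb.measure_lt_top.ne]
    congr 2
    ring
  have hh0 : ENNReal.ofReal h ≠ 0 := (ENNReal.ofReal_pos.mpr hh).ne'
  calc Eh W A Ω h u
      ≤ (ENNReal.ofReal h)⁻¹ *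
        ∫⁻ _x in Ω ×ˢ Set.Ioo (-(h / 2)) (h / 2), ENNReal.ofReal K :=
        mul_le_mul_right (setLIntegral_mono' hmeas hd) _
    _ = ENNReal.ofReal K * ENNReal.ofReal (volume.real Ω) *
        (ENNReal.ofReal h * (ENNReal.ofReal h)⁻¹) := by
        rw [setLIntegral_const, hvol]
        ring
    _ = ENNReal.ofReal (K * volume.real Ω) := by
        rw [ENNReal.mul_inv_cancel hh0 ENNReal.ofReal_ne_top, mul_one, ENNReal.ofReal_mul hK]

/-- The deformation `u^h = y₀ + x₃ b₀ + (x₃²/2) d₀` has energy `E^h(u^h) ≤ C h⁴`;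
in particular `inf E^h ≤ C h⁴`. -/
theorem stmt0
    (Ω : Set E2) (hΩo : IsOpen Ω) (hΩb : Bornology.IsBounded Ω)
    (hΩsc : SimplyConnectedSpace ↥Ω)
    (G : E2 → M3) (hGsm : ContDiffOn ℝ (⊤ : ℕ∞) G (closure Ω))
    (hGsym : ∀ x ∈ closure Ω, SymM (G x)) (hGpos : ∀ x ∈ closure Ω, PosDefM (G x))
    (y0 : E2 → V3) (hy0sm : ContDiffOn ℝ (⊤ : ℕ∞) y0 (closure Ω))
    (himm : ∀ x ∈ Ω, ∀ i j : Fin 2,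
      dot3 (pdv i y0 x) (pdv j y0 x) = G x i.castSucc j.castSucc)
    (b0 : E2 → V3) (hb0sm : ContDiffOn ℝ (⊤ : ℕ∞) b0 (closure Ω))
    (hQ0 : ∀ x ∈ Ω, ∀ i j : Fin 3,
      dot3 (Qcol y0 b0 x i) (Qcol y0 b0 x j) = G x i j)
    (hQdet : ∀ x ∈ Ω, 0 < Qdet y0 b0 x)
    (hsym0 : ∀ x ∈ Ω, ∀ i j : Fin 2,
      dot3 (pdv i y0 x) (pdv j b0 x) + dot3 (pdv j y0 x) (pdv i b0 x) = 0)
    (d0 : E2 → V3) (hd0sm : ContDiffOn ℝ (⊤ : ℕ∞) d0 (closure Ω))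
    (hd0 : ∀ x ∈ Ω,
      (∀ i : Fin 2, dot3 (Qcol y0 b0 x i.castSucc) (d0 x) = - dot3 (pdv i b0 x) (b0 x)) ∧
      dot3 (Qcol y0 b0 x 2) (d0 x) = 0)
    (A : E2 → M3)
    (hA : ∀ x ∈ closure Ω, SymM (A x) ∧ PosDefM (A x) ∧ mmul (A x) (A x) = G x)
    (W : M3 → ℝ≥0∞) (c : ℝ) (hc : 0 < c)
    (hW0 : ∀ R ∈ SO3, W R = 0)
    (hWfr : ∀ R ∈ SO3, ∀ F : M3, W (mmul R F) = W F)
    (hWgrow : ∀ F : M3, ENNReal.ofReal (c * Metric.infDist F SO3 ^ 2) ≤ W F)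
    (U : Set M3) (hUopen : IsOpen U) (hUSO3 : SO3 ⊆ U)
    (Wr : M3 → ℝ) (hWrC2 : ContDiffOn ℝ 2 Wr U)
    (hWrep : ∀ F ∈ U, W F = ENNReal.ofReal (Wr F))
 :
    ∃ C > (0 : ℝ), ∃ h0 ∈ Set.Ioc (0 : ℝ) 1, ∀ h ∈ Set.Ioc (0 : ℝ) h0,
      Eh W A Ω h
        (fun x : E2 × ℝ => fun a =>
          y0 x.1 a + x.2 * b0 x.1 a + x.2 ^ 2 / 2 * d0 x.1 a) ≤
        ENNReal.ofReal (C * h ^ 4) ∧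
      (⨅ u : E2 × ℝ → V3, Eh W A Ω h u) ≤ ENNReal.ofReal (C * h ^ 4) := by
  have hcomp : IsCompact (closure Ω) := hΩb.isCompact_closure
  obtain ⟨L, δ, hL, hδ, hW⟩ :=
    exists_density_quadratic_bound hc hW0 hWgrow hUopen hUSO3 hWrC2 hWrep
  obtain ⟨a, ha⟩ := exists_inv_sqrt_bound hcomp hGsm.continuousOn hA
  obtain ⟨β₁, hβ₁⟩ := exists_fderiv_bound hΩo hΩb (hb0sm.of_le (by norm_cast))
  obtain ⟨β₂, hβ₂⟩ := exists_fderiv_bound hΩo hΩb (hd0sm.of_le (by norm_cast))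
  obtain ⟨β₃, hβ₃⟩ := hcomp.exists_bound_of_continuousOn hd0sm.continuousOn
  set b : ℝ := max (max β₁ β₂) (max β₃ 0) with hb
  have hb₁ : β₁ ≤ b := (le_max_left _ _).trans (le_max_left _ _)
  have hb₂ : β₂ ≤ b := (le_max_right _ _).trans (le_max_left _ _)
  have hb₃ : β₃ ≤ b := (le_max_left _ _).trans (le_max_right _ _)
  have hb₀ : 0 ≤ b := (le_max_right _ _).trans (le_max_right _ _)
  set m : ℝ := |3 * (9 * (a * b) + 5 * (9 * (a * b)) ^ 2)| with hm
  have hm0 : 0 ≤ m := abs_nonneg _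
  have hdiff : ∀ {f : E2 → V3}, ContDiffOn ℝ (⊤ : ℕ∞) f (closure Ω) → ∀ x ∈ Ω,
      DifferentiableAt ℝ f x := fun hf x hx =>
    (hf.contDiffAt (mem_of_superset (hΩo.mem_nhds hx) subset_closure)).differentiableAt (by simp)
  refine ⟨L * m ^ 2 * volume.real Ω + 1, by positivity, min 1 (δ / (m + 1)),
    ⟨lt_min one_pos (by positivity), min_le_left _ _⟩, fun h hh => ?_⟩
  have hh1 : h ≤ 1 := hh.2.trans (min_le_left _ _)
  have hhδ : h ^ 2 * m ≤ δ := by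
    have h1 : h * (m + 1) ≤ δ := (le_div_iff₀ (by positivity)).mp (hh.2.trans (min_le_right _ _))
    have h2 : h ^ 2 ≤ h := by nlinarith [hh.1]
    nlinarith [mul_le_mul_of_nonneg_right h2 hm0, hh.1]
  refine (fun hE => ⟨hE, (iInf_le _ _).trans hE⟩) ?_
  refine (Eh_le_of_density_le (K := L * m ^ 2 * h ^ 4) hΩo hΩb hh.1 (by positivity) ?_).trans
    (ENNReal.ofReal_le_ofReal ?_)
  · rintro ⟨x, t⟩ ⟨hx, ht⟩
    have hxc : x ∈ closure Ω := subset_closure hx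
    have hth : |t| ≤ h := abs_le.mpr ⟨by linarith [ht.1, hh.1], by linarith [ht.2, hh.1]⟩
    refine plate_density_le hWfr hL hW (hA x hxc).1 (hA x hxc).2.1 ?_ (hQdet x hx)
      (transpose_plate_frame_skew (hsym0 x hx) (hd0 x hx)) (ha x hxc)
      (abs_columns_le ((norm_pdv_le (hβ₁ x hx) 0).trans hb₁)
        ((norm_pdv_le (hβ₁ x hx) 1).trans hb₁) ((hβ₃ x hxc).trans hb₃))
      (abs_columns_le ((norm_pdv_le (hβ₂ x hx) 0).trans hb₂)
        ((norm_pdv_le (hβ₂ x hx) 1).trans hb₂) (by rwa [norm_zero])) (le_abs_self _) hth hhδ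
      (gradu_plate t (hdiff hy0sm x hx) (hdiff hb0sm x hx) (hdiff hd0sm x hx))
    rw [transpose_mul_frame (hQ0 x hx), (hA x hxc).2.2]
  · have h4 : 0 ≤ h ^ 4 := by positivity
    nlinarith
end
end

section
/- At every point of Ω the following 2×2 matrix identity holds: sym((∇y0)ᵀ ∇d0) + (∇b0)ᵀ ∇b0 = [[R_{1313}, R_{1323}], [R_{1323}, R_{2323}]], where R_{iklm} are the covariant Riemann curvatures of G. -/
noncomputable section

open scoped Topology ENNReal
open Filter MeasureTheory

lemma dot3_comm (u v : V3) : dot3 u v = dot3 v u := by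
  simp only [dot3, mul_comm]

lemma pd3_castSucc (i : Fin 2) (f : E2 → ℝ) (x : E2) : pd3 i.castSucc f x = pd2 i f x :=
  dif_pos i.isLt

lemma pd3_two (f : E2 → ℝ) (x : E2) : pd3 2 f x = 0 := by
  simp [pd3]

lemma pd2_zero (i : Fin 2) (x : E2) : pd2 i (fun _ => 0) x = 0 := by
  simp [pd2]

lemma Qcol_castSucc (y0 b0 : E2 → V3) (x : E2) (i : Fin 2) :
    Qcol y0 b0 x i.castSucc = pdv i y0 x := by
  fin_cases i <;> rfl

lemma Qcol_two (y0 b0 : E2 → V3) (x : E2) : Qcol y0 b0 x 2 = b0 x := rfl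

lemma pd2_congr {f g : E2 → ℝ} {x : E2} (h : f =ᶠ[𝓝 x] g) (i : Fin 2) :
    pd2 i f x = pd2 i g x := by
  rw [pd2, pd2, h.fderiv_eq]

/-- Product rule for the inner product of two vector fields. -/
lemma pd2_dot3 {f g : E2 → V3} {x : E2} (hf : DifferentiableAt ℝ f x)
    (hg : DifferentiableAt ℝ g x) (i : Fin 2) :
    pd2 i (fun y => dot3 (f y) (g y)) x =
      dot3 (pdv i f x) (g x) + dot3 (f x) (pdv i g x) := by
  have hf' := hasFDerivAt_pi'.1 hf.hasFDerivAt
  have hg' := hasFDerivAt_pi'.1 hg.hasFDerivAt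
  have h : HasFDerivAt (fun y => dot3 (f y) (g y)) _ x :=
    HasFDerivAt.fun_sum (u := Finset.univ) fun k _ => (hf' k).mul (hg' k)
  rw [pd2, h.fderiv]
  simp [dot3, pdv, ← Finset.sum_add_distrib, mul_comm, add_comm]

lemma differentiableAt_of_contDiffAt_top {f : E2 → V3} {x : E2}
    (hf : ContDiffAt ℝ (⊤ : ℕ∞) f x) : DifferentiableAt ℝ f x :=
  hf.differentiableAt (by simp)

lemma contDiffAt_pdv {f : E2 → V3} {x : E2} (hf : ContDiffAt ℝ (⊤ : ℕ∞) f x) (i : Fin 2) :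
    ContDiffAt ℝ (⊤ : ℕ∞) (pdv i f) x :=
  (hf.fderiv_right (m := (⊤ : ℕ∞)) (by simp)).clm_apply contDiffAt_const

/-- Second partial derivatives commute. -/
lemma pdv_pdv_comm {f : E2 → V3} {x : E2} (hf : ContDiffAt ℝ (⊤ : ℕ∞) f x) (i j : Fin 2) :
    pdv i (pdv j f) x = pdv j (pdv i f) x := by
  have hd : DifferentiableAt ℝ (fderiv ℝ f) x :=
    (hf.fderiv_right (m := (⊤ : ℕ∞)) (by simp)).differentiableAt (by simp)
  have key : ∀ i j : Fin 2, pdv i (pdv j f) x =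
      fderiv ℝ (fderiv ℝ f) x (Pi.single i 1) (Pi.single j 1) := by
    intro i j
    change fderiv ℝ (fun y => fderiv ℝ f y (Pi.single j 1)) x (Pi.single i 1) = _
    rw [fderiv_clm_apply hd (differentiableAt_const _)]
    simp
  have hs : IsSymmSndFDerivAt ℝ f x := hf.isSymmSndFDerivAt <| by
    rw [minSmoothness_of_isRCLikeNormedField]
    exact WithTop.coe_le_coe.2 (le_top : (2 : ℕ∞) ≤ ⊤)
  rw [key, key]
  exact hs _ _

/-- If `A` is the Gram matrix of a basis `q`, then lowering the indices of `u` and `v` along `q`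
and contracting with `A` after raising them by `A⁻¹` recovers the inner product of `u` and `v`. -/
lemma sum_gram_minv {q : Fin 3 → V3} {A : M3} (hA : ∀ i j, dot3 (q i) (q j) = A i j)
    (hq : (Matrix.of fun a j => q j a).det ≠ 0) (u v : V3) :
    ∑ n, ∑ p, A n p * ((∑ s, minv A n s * dot3 (q s) u) * ∑ s, minv A p s * dot3 (q s) v) =
      dot3 u v := by
  set Q : Matrix (Fin 3) (Fin 3) ℝ := Matrix.of fun a j => q j a with hQ
  have hAQ : Matrix.of A = Q.transpose * Q := by
    ext i j
    simp [← hA, dot3, Matrix.mul_apply, hQ]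
  have hu : IsUnit Q.det := isUnit_iff_ne_zero.2 hq
  have hraise : ∀ w : V3, Q.mulVec (fun n => ∑ s, minv A n s * dot3 (q s) w) = w := by
    intro w
    have h1 : (fun n => ∑ s, minv A n s * dot3 (q s) w) =
        (Matrix.of A)⁻¹.mulVec (Q.transpose.mulVec w) := rfl
    rw [h1, hAQ, Matrix.mulVec_mulVec, Matrix.mulVec_mulVec, Matrix.mul_inv_rev,
      ← Matrix.mul_assoc, Matrix.mul_nonsing_inv _ hu, Matrix.one_mul,
      Matrix.nonsing_inv_mul _ (by rwa [Matrix.det_transpose]), Matrix.one_mulVec]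
  have hgram : ∀ a b : V3, ∑ n, ∑ p, A n p * (a n * b p) =
      dot3 (Q.mulVec a) (Q.mulVec b) := by
    intro a b
    simp only [← hA, dot3, Matrix.mulVec, dotProduct, hQ, Matrix.of_apply, Fin.sum_univ_three]
    ring
  rw [hgram (fun n => ∑ s, minv A n s * dot3 (q s) u) (fun p => ∑ s, minv A p s * dot3 (q s) v),
    hraise, hraise]

lemma fin_three_eq_castSucc_or_two (s : Fin 3) : (∃ i : Fin 2, s = i.castSucc) ∨ s = 2 := by
  fin_cases s
  · exact Or.inl ⟨0, rfl⟩
  · exact Or.inl ⟨1, rfl⟩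
  · exact Or.inr rfl

/-- `sym((∇y₀)ᵀ∇d₀) + (∇b₀)ᵀ∇b₀ = [[R₁₃₁₃, R₁₃₂₃], [R₁₃₂₃, R₂₃₂₃]]` on `Ω`. -/
theorem stmt5
    (Ω : Set E2) (hΩo : IsOpen Ω) (hΩb : Bornology.IsBounded Ω)
    (hΩsc : SimplyConnectedSpace ↥Ω)
    (G : E2 → M3) (hGsm : ContDiffOn ℝ (⊤ : ℕ∞) G (closure Ω))
    (hGsym : ∀ x ∈ closure Ω, SymM (G x)) (hGpos : ∀ x ∈ closure Ω, PosDefM (G x))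
    (y0 : E2 → V3) (hy0sm : ContDiffOn ℝ (⊤ : ℕ∞) y0 (closure Ω))
    (himm : ∀ x ∈ Ω, ∀ i j : Fin 2,
      dot3 (pdv i y0 x) (pdv j y0 x) = G x i.castSucc j.castSucc)
    (b0 : E2 → V3) (hb0sm : ContDiffOn ℝ (⊤ : ℕ∞) b0 (closure Ω))
    (hQ0 : ∀ x ∈ Ω, ∀ i j : Fin 3,
      dot3 (Qcol y0 b0 x i) (Qcol y0 b0 x j) = G x i j)
    (hQdet : ∀ x ∈ Ω, 0 < Qdet y0 b0 x)
    (hsym0 : ∀ x ∈ Ω, ∀ i j : Fin 2,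
      dot3 (pdv i y0 x) (pdv j b0 x) + dot3 (pdv j y0 x) (pdv i b0 x) = 0)
    (d0 : E2 → V3) (hd0sm : ContDiffOn ℝ (⊤ : ℕ∞) d0 (closure Ω))
    (hd0 : ∀ x ∈ Ω,
      (∀ i : Fin 2, dot3 (Qcol y0 b0 x i.castSucc) (d0 x) = - dot3 (pdv i b0 x) (b0 x)) ∧
      dot3 (Qcol y0 b0 x 2) (d0 x) = 0)
 :
    ∀ x ∈ Ω, ∀ i j : Fin 2,
      (dot3 (pdv i y0 x) (pdv j d0 x) + dot3 (pdv j y0 x) (pdv i d0 x)) / 2 +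
        dot3 (pdv i b0 x) (pdv j b0 x) =
      Riem G i.castSucc 2 j.castSucc 2 x := by
  intro x hx i j
  have smooth : ∀ {f : E2 → V3}, ContDiffOn ℝ (⊤ : ℕ∞) f (closure Ω) →
      ∀ y ∈ Ω, ContDiffAt ℝ (⊤ : ℕ∞) f y := fun hf y hy =>
    hf.contDiffAt (mem_of_superset (hΩo.mem_nhds hy) subset_closure)
  have hy := smooth hy0sm
  have hb := smooth hb0sm
  have hd := smooth hd0sm
  have near : ∀ y ∈ Ω, ∀ᶠ z in 𝓝 y, z ∈ Ω := fun y hy => hΩo.mem_nhds hy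
  -- the first derivatives of the metric
  have hG : ∀ (k : Fin 2), ∀ y ∈ Ω, ∀ s t : Fin 3, pd2 k (fun z => G z s t) y =
      pd2 k (fun z => dot3 (Qcol y0 b0 z s) (Qcol y0 b0 z t)) y := fun k y hyΩ s t =>
    pd2_congr ((near y hyΩ).mono fun z hz => (hQ0 z hz s t).symm) k
  have hyd : ∀ y ∈ Ω, ∀ k, DifferentiableAt ℝ (pdv k y0) y := fun y hyΩ k =>
    differentiableAt_of_contDiffAt_top (contDiffAt_pdv (hy y hyΩ) k)
  have hbd : ∀ y ∈ Ω, DifferentiableAt ℝ b0 y := fun y hyΩ =>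
    differentiableAt_of_contDiffAt_top (hb y hyΩ)
  have hbd' : ∀ y ∈ Ω, ∀ k, DifferentiableAt ℝ (pdv k b0) y := fun y hyΩ k =>
    differentiableAt_of_contDiffAt_top (contDiffAt_pdv (hb y hyΩ) k)
  have G11 : ∀ k a c : Fin 2, pd2 k (fun z => G z a.castSucc c.castSucc) x =
      dot3 (pdv k (pdv a y0) x) (pdv c y0 x) + dot3 (pdv a y0 x) (pdv k (pdv c y0) x) := by
    intro k a c
    rw [hG k x hx]
    simp only [Qcol_castSucc]
    exact pd2_dot3 (hyd x hx a) (hyd x hx c) k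
  have G12 : ∀ k a : Fin 2, pd2 k (fun z => G z a.castSucc 2) x =
      dot3 (pdv k (pdv a y0) x) (b0 x) + dot3 (pdv a y0 x) (pdv k b0 x) := by
    intro k a
    rw [hG k x hx]
    simp only [Qcol_castSucc, Qcol_two]
    exact pd2_dot3 (hyd x hx a) (hbd x hx) k
  have G21 : ∀ k a : Fin 2, pd2 k (fun z => G z 2 a.castSucc) x =
      dot3 (pdv k (pdv a y0) x) (b0 x) + dot3 (pdv a y0 x) (pdv k b0 x) := by
    intro k a
    rw [← G12]
    exact pd2_congr ((near x hx).mono fun z hz => hGsym z (subset_closure hz) _ _) k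
  have G22 : ∀ k : Fin 2, ∀ y ∈ Ω, pd2 k (fun z => G z 2 2) y =
      dot3 (pdv k b0 y) (b0 y) + dot3 (b0 y) (pdv k b0 y) := by
    intro k y hyΩ
    rw [hG k y hyΩ]
    simp only [Qcol_two]
    exact pd2_dot3 (hbd y hyΩ) (hbd y hyΩ) k
  have G22' : pd2 i (fun y => pd2 j (fun z => G z 2 2) y) x =
      2 * (dot3 (pdv i (pdv j b0) x) (b0 x) + dot3 (pdv j b0 x) (pdv i b0 x)) := by
    have h1 := pd2_dot3 (hbd' x hx j) (hbd x hx) i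
    rw [pd2_congr ((near x hx).mono fun z hz => G22 j z hz) i]
    have hadd : pd2 i (fun z => dot3 (pdv j b0 z) (b0 z) + dot3 (b0 z) (pdv j b0 z)) x =
        2 * pd2 i (fun z => dot3 (pdv j b0 z) (b0 z)) x := by
      have hdiff : DifferentiableAt ℝ (fun z => dot3 (pdv j b0 z) (b0 z)) x := by
        refine DifferentiableAt.fun_sum fun k _ => ?_
        exact (differentiableAt_pi.1 (hbd' x hx j) k).mul (differentiableAt_pi.1 (hbd x hx) k)
      simp only [fun z => dot3_comm (b0 z) (pdv j b0 z), ← two_mul]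
      simp [pd2, fderiv_const_mul hdiff]
    rw [hadd, h1]
  -- the Christoffel symbols of the first kind
  have Γ33 : ∀ n, Gamma G n 2 2 x = ∑ s, minv (G x) n s * dot3 (Qcol y0 b0 x s) (d0 x) := by
    intro n
    rw [Gamma, Finset.mul_sum]
    refine Finset.sum_congr rfl fun s _ => ?_
    rcases fin_three_eq_castSucc_or_two s with ⟨a, rfl⟩ | rfl
    · rw [pd3_two, pd3_castSucc, G22 a x hx, (hd0 x hx).1 a, dot3_comm (b0 x)]
      ring
    · rw [pd3_two, (hd0 x hx).2]
      ring
  have Γ3 : ∀ (k : Fin 2) n, Gamma G n 2 k.castSucc x =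
      ∑ s, minv (G x) n s * dot3 (Qcol y0 b0 x s) (pdv k b0 x) := by
    intro k n
    rw [Gamma, Finset.mul_sum]
    refine Finset.sum_congr rfl fun s _ => ?_
    rcases fin_three_eq_castSucc_or_two s with ⟨a, rfl⟩ | rfl
    · rw [pd3_two, pd3_castSucc, pd3_castSucc, G12, G21, Qcol_castSucc,
        pdv_pdv_comm (hy x hx) k a]
      linear_combination (-(1 / 2) * minv (G x) n a.castSucc) * hsym0 x hx a k
    · rw [pd3_two, pd3_castSucc, G22 k x hx, Qcol_two, dot3_comm (b0 x)]
      ring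
  have Γ3' : ∀ (k : Fin 2) n, Gamma G n k.castSucc 2 x =
      ∑ s, minv (G x) n s * dot3 (Qcol y0 b0 x s) (pdv k b0 x) := by
    intro k n
    rw [← Γ3, Gamma, Gamma]
    congr 1
    refine Finset.sum_congr rfl fun s _ => ?_
    have hswap : pd3 s (fun y => G y k.castSucc 2) x = pd3 s (fun y => G y 2 k.castSucc) x := by
      rcases fin_three_eq_castSucc_or_two s with ⟨a, rfl⟩ | rfl
      · rw [pd3_castSucc, pd3_castSucc, G12, G21]
      · rw [pd3_two, pd3_two]
    rw [hswap]
    ring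
  have Γij : ∀ n, Gamma G n i.castSucc j.castSucc x =
      ∑ s, minv (G x) n s * dot3 (Qcol y0 b0 x s) (pdv i (pdv j y0) x) := by
    intro n
    rw [Gamma, Finset.mul_sum]
    refine Finset.sum_congr rfl fun s _ => ?_
    rcases fin_three_eq_castSucc_or_two s with ⟨a, rfl⟩ | rfl
    · rw [pd3_castSucc, pd3_castSucc, pd3_castSucc, G11, G11, G11, Qcol_castSucc,
        pdv_pdv_comm (hy x hx) a i, pdv_pdv_comm (hy x hx) a j, pdv_pdv_comm (hy x hx) j i,
        dot3_comm (pdv i y0 x)]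
      ring
    · rw [pd3_castSucc, pd3_castSucc, pd3_two, G21, G21, Qcol_two,
        pdv_pdv_comm (hy x hx) j i, dot3_comm (b0 x)]
      linear_combination ((1 / 2) * minv (G x) n 2) * hsym0 x hx i j
  -- the derivative of the defining relation of `d0`
  have hdd : ∀ a c : Fin 2,
      dot3 (pdv c (pdv a y0) x) (d0 x) + dot3 (pdv a y0 x) (pdv c d0 x) =
        -(dot3 (pdv c (pdv a b0) x) (b0 x) + dot3 (pdv a b0 x) (pdv c b0 x)) := by
    intro a c
    rw [← pd2_dot3 (hyd x hx a) (differentiableAt_of_contDiffAt_top (hd x hx)) c,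
      ← pd2_dot3 (hbd' x hx a) (hbd x hx) c]
    have h : (fun y => dot3 (pdv a y0 y) (d0 y)) =ᶠ[𝓝 x]
        fun y => -dot3 (pdv a b0 y) (b0 y) :=
      (near x hx).mono fun z hz => by
        simpa only [Qcol_castSucc] using (hd0 z hz).1 a
    rw [pd2_congr h c]
    simp [pd2, fderiv_fun_neg]
  have contract := sum_gram_minv (hQ0 x hx) (hQdet x hx).ne'
  rw [Riem]
  simp only [pd3_two, pd3_castSucc, pd2_zero, G22', Γ33, Γ3, Γ3', Γij, mul_sub,
    Finset.sum_sub_distrib, contract]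
  have h1 := hdd i j
  have h2 := hdd j i
  rw [pdv_pdv_comm (hy x hx) j i, pdv_pdv_comm (hb x hx) j i] at h1
  rw [dot3_comm (pdv j b0 x)] at h2 ⊢
  rw [dot3_comm (d0 x)]
  linear_combination (1 / 2) * h1 + (1 / 2) * h2
end
end
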